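/- Every bridgeless graph of order n ≥ 5 with at least n + 3 edges has an orientation of diameter at most n - 2. -/

import Mathlib

open SimpleGraph

/-- `R` is an orientation of the simple graph `G`: every arc of `R` lies on an edge of `G`,
and every edge of `G` receives exactly one of its two possible directions. -/
def IsOrientation {V : Type*} (G : SimpleGraph V) (R : V → V → Prop) : Prop :=
  (∀ u v, R u v → G.Adj u v) ∧ ∀ u v, G.Adj u v → (R u v ↔ ¬ R v u)

/-- `RelPow R k u v` : there is a directed walk of length `k` from `u` to `v`. -/
def RelPow {V : Type*} (R : V → V → Prop) : ℕ → V → V → Prop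
  | 0, u, v => u = v
  | n + 1, u, v => ∃ w, R u w ∧ RelPow R n w v

/-- The digraph `R` has diameter at most `d`: any vertex can reach any other by a
directed walk of length at most `d`. -/
def DiamLE {V : Type*} (R : V → V → Prop) (d : ℕ) : Prop :=
  ∀ u v, ∃ k ≤ d, RelPow R k u v

/-- A digraph is strongly connected if every vertex can reach every other. -/
def StronglyConnected {V : Type*} (R : V → V → Prop) : Prop :=
  ∀ u v, Relation.ReflTransGen R u v

/-- A graph is bridgeless if it is connected and contains no bridge. -/
def Bridgeless {V : Type*} (G : SimpleGraph V) : Prop :=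
  G.Connected ∧ ∀ e, ¬ G.IsBridge e

/-- The graph `G_{n,d}`: the path `u_1 … u_d` is the set of indices `0,…,d-1`,
the clique `K_{n-d-1}` is the set of indices `d,…,n-2`, both endpoints `0` and `d-1`
of the path are joined to all clique vertices, and the extra vertex `u_3'` is the
index `n-1`, joined to `u_2, u_3, u_4`, i.e. to indices `1, 2, 3`. -/
def Gnd (n d : ℕ) : SimpleGraph (Fin n) :=
  SimpleGraph.fromRel (fun i j =>
    ((i : ℕ) + 1 = (j : ℕ) ∧ (j : ℕ) < d) ∨
    (d ≤ (i : ℕ) ∧ (i : ℕ) < n - 1 ∧ d ≤ (j : ℕ) ∧ (j : ℕ) < n - 1) ∨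
    (((i : ℕ) = 0 ∨ (i : ℕ) = d - 1) ∧ d ≤ (j : ℕ) ∧ (j : ℕ) < n - 1) ∨
    ((i : ℕ) = n - 1 ∧ ((j : ℕ) = 1 ∨ (j : ℕ) = 2 ∨ (j : ℕ) = 3)))

/-- The graph `H_{n,n-2}`: the cycle `u_1 … u_{n-1} u_1` is the set of indices
`0,…,n-2` in cyclic order, and the extra vertex `u_3'` is the index `n-1`,
joined to `u_2, u_3, u_4`, i.e. to indices `1, 2, 3`. -/
def Hgraph (n : ℕ) : SimpleGraph (Fin n) :=
  SimpleGraph.fromRel (fun i j =>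
    ((i : ℕ) + 1 = (j : ℕ) ∧ (j : ℕ) ≤ n - 2) ∨
    ((i : ℕ) = 0 ∧ (j : ℕ) = n - 2) ∨
    ((i : ℕ) = n - 1 ∧ ((j : ℕ) = 1 ∨ (j : ℕ) = 2 ∨ (j : ℕ) = 3)))

open Relation


def Av (R : ℕ → ℕ → Prop) (w : ℕ) : ℕ → ℕ → Prop := fun i j => R i j ∧ i ≠ w ∧ j ≠ w

def GoodC (N : ℕ) (C : ℕ → ℕ → Prop) : Prop :=
  ∃ R : ℕ → ℕ → Prop,
    (∀ i j, R i j → (j = i + 1 ∧ j ≤ N) ∨ (i = j + 1 ∧ i ≤ N) ∨ C i j ∨ C j i) ∧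
    (∀ i j, R i j → ¬ R j i) ∧
    ∀ x y, x ≤ N → y ≤ N → x ≠ y → ∃ w, w ≤ N ∧ w ≠ x ∧ w ≠ y ∧ ReflTransGen (Av R w) x y

theorem fwd {S : ℕ → ℕ → Prop} {x y : ℕ} (h : x ≤ y)
    (H : ∀ i, x ≤ i → i < y → S i (i + 1)) : ReflTransGen S x y := by
  induction y, h using Nat.le_induction with
  | base => exact .refl
  | succ n hn ih => exact (ih fun i h1 h2 => H i h1 (by omega)).tail (H n hn (by omega))

theorem bwd {S : ℕ → ℕ → Prop} {x y : ℕ} (h : y ≤ x)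
    (H : ∀ i, y ≤ i → i < x → S (i + 1) i) : ReflTransGen S x y := by
  induction x, h using Nat.le_induction with
  | base => exact .refl
  | succ n hn ih => exact ReflTransGen.head (H n hn (by omega)) (ih fun i h1 h2 => H i h1 (by omega))

/-- going back using chords -/
theorem backreach {S : ℕ → ℕ → Prop} (P : ℕ → Prop) (p : ℕ)
    (H : ∀ v, P v → v = p ∨ ∃ a b, a < v ∧ v ≤ b ∧ P a ∧ S b a ∧ ∀ i, v ≤ i → i < b → S i (i + 1)) :
    ∀ v, P v → ReflTransGen S v p := by
  intro v
  induction v using Nat.strong_induction_on with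
  | _ v ih =>
    intro hv
    rcases H v hv with rfl | ⟨a, b, h1, h2, h3, h4, h5⟩
    · exact .refl
    · exact ((fwd h2 h5).tail h4).trans (ih a h1 h3)

theorem mirror {N : ℕ} {C : ℕ → ℕ → Prop}
    (h : GoodC N (fun a b => a ≤ N ∧ b ≤ N ∧ C (N - b) (N - a))) : GoodC N C := by
  obtain ⟨R, h1, h2, h3⟩ := h
  refine ⟨fun i j => i ≤ N ∧ j ≤ N ∧ R (N - i) (N - j), ?_, ?_, ?_⟩
  · rintro i j ⟨hi, hj, h⟩
    rcases h1 _ _ h with h | h | h | h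
    · omega
    · omega
    · rw [show N - (N - i) = i by omega, show N - (N - j) = j by omega] at h; tauto
    · rw [show N - (N - i) = i by omega, show N - (N - j) = j by omega] at h; tauto
  · rintro i j ⟨hi, hj, h⟩ ⟨_, _, h'⟩
    exact h2 _ _ h h'
  · intro x y hx hy hxy
    obtain ⟨w, hw, hwx, hwy, hr⟩ := h3 (N - x) (N - y) (by omega) (by omega) (by omega)
    refine ⟨N - w, by omega, by omega, by omega, ?_⟩
    have key : ∀ u, ReflTransGen (Av R w) (N - x) u → 
        u ≤ N ∧ ReflTransGen (Av (fun i j => i ≤ N ∧ j ≤ N ∧ R (N - i) (N - j)) (N - w)) x (N - u) := by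
      intro u hu
      induction hu with
      | refl => exact ⟨by omega, by rw [show N - (N - x) = x by omega]⟩
      | @tail b c hb hbc ih =>
        obtain ⟨hbN, ih⟩ := ih
        have hcN : c ≤ N := by
          rcases h1 _ _ hbc.1 with h | h | h | h
          · omega
          · omega
          · exact h.2.1
          · exact h.1
        refine ⟨hcN, ih.tail ⟨⟨by omega, by omega, ?_⟩, ?_, ?_⟩⟩
        · rw [show N - (N - b) = b by omega, show N - (N - c) = c by omega]; exact hbc.1
        · have := hbc.2.1; omega
        · have := hbc.2.2; omega
    have := (key _ hr).2
    rwa [show N - (N - y) = y by omega] at this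

/-- Hamiltonian cycle case, all chords oriented through `U`. -/
theorem case1_aux {N : ℕ} {C : ℕ → ℕ → Prop} (hC : ∀ a b, C a b → a + 2 ≤ b ∧ b ≤ N)
    (h0 : C 0 N) (U : ℕ → ℕ → Prop)
    (hU : ∀ t, t ≤ N → ∃ a b, C a b ∧ ¬ (a = 0 ∧ b = N) ∧
      ((U a b ∧ ¬ (a ≤ t ∧ t < b)) ∨ (¬ U a b ∧ a ≤ t ∧ t < b))) : GoodC N C := by
  have hN := hC _ _ h0
  refine ⟨fun i j => (j = i + 1 ∧ j ≤ N) ∨ (i = N ∧ j = 0) ∨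
    (C i j ∧ U i j ∧ ¬ (i = 0 ∧ j = N)) ∨ (C j i ∧ ¬ U j i ∧ ¬ (j = 0 ∧ i = N)), ?_, ?_, ?_⟩
  · rintro i j (h | ⟨rfl, rfl⟩ | h | h)
    · exact Or.inl h
    · tauto
    · tauto
    · tauto
  · intro i j h h'
    have e1 := hC i j
    have e2 := hC j i
    rcases h with h | h | ⟨c, u, h⟩ | ⟨c, u, h⟩ <;> rcases h' with h' | h' | ⟨c', u', h'⟩ | ⟨c', u', h'⟩
    all_goals first | omega | skip
    all_goals first | (have := e1 c; omega) | (have := e2 c; omega) | (have := e1 c'; omega) | (have := e2 c'; omega) | skip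
    all_goals first | tauto | skip
    all_goals (have := e1 (by assumption); have := e2 (by assumption); omega)
  · intro x y hx hy hxy
    by_cases hlt : x < y
    · by_cases h2 : x = 0 ∧ y = N
      · obtain ⟨a, b, c, hn, ⟨hu, ht⟩ | ⟨hu, ht⟩⟩ := hU N le_rfl
        · have := hC _ _ c
          refine ⟨a + 1, by omega, by omega, by omega, ?_⟩
          refine (ReflTransGen.tail (fwd (y := a) (by omega) ?_) (c := b) ?_).trans (fwd (by omega) ?_)
          · intro i _ _; exact ⟨Or.inl (by omega), by omega, by omega⟩
          · exact ⟨by tauto, by omega, by omega⟩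
          · intro i _ _; exact ⟨Or.inl (by omega), by omega, by omega⟩
        · have := hC _ _ c
          omega
      · by_cases h3 : x = 0
        · refine ⟨N, by omega, by omega, by omega, fwd (by omega) ?_⟩
          intro i _ _; exact ⟨Or.inl (by omega), by omega, by omega⟩
        · refine ⟨0, by omega, by omega, by omega, fwd (by omega) ?_⟩
          intro i _ _; exact ⟨Or.inl (by omega), by omega, by omega⟩
    · by_cases h2 : y + 1 < x
      · refine ⟨y + 1, by omega, by omega, by omega, ?_⟩
        refine (ReflTransGen.tail (fwd (y := N) (by omega) ?_) (c := 0) ?_).trans (fwd (by omega) ?_)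
        · intro i _ _; exact ⟨Or.inl (by omega), by omega, by omega⟩
        · exact ⟨by tauto, by omega, by omega⟩
        · intro i _ _; exact ⟨Or.inl (by omega), by omega, by omega⟩
      · obtain ⟨a, b, c, hn, ⟨hu, ht⟩ | ⟨hu, ht⟩⟩ := hU y hy
        · have := hC _ _ c
          refine ⟨a + 1, by omega, by omega, by omega, ?_⟩
          by_cases hay : y < a
          · refine (ReflTransGen.tail (((fwd (y := a) (by omega) ?_).tail (c := b) ?_).trans (fwd (y := N) (by omega) ?_)) (c := 0) ?_).trans (fwd (by omega) ?_)
            · intro i _ _; exact ⟨Or.inl (by omega), by omega, by omega⟩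
            · exact ⟨by tauto, by omega, by omega⟩
            · intro i _ _; exact ⟨Or.inl (by omega), by omega, by omega⟩
            · exact ⟨by tauto, by omega, by omega⟩
            · intro i _ _; exact ⟨Or.inl (by omega), by omega, by omega⟩
          · refine (ReflTransGen.tail ((ReflTransGen.tail (fwd (y := N) (by omega) ?_) (c := 0) ?_).trans (fwd (y := a) (by omega) ?_)) (c := b) ?_).trans (fwd (by omega) ?_)
            · intro i _ _; exact ⟨Or.inl (by omega), by omega, by omega⟩
            · exact ⟨by tauto, by omega, by omega⟩
            · intro i _ _; exact ⟨Or.inl (by omega), by omega, by omega⟩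
            · exact ⟨by tauto, by omega, by omega⟩
            · intro i _ _; exact ⟨Or.inl (by omega), by omega, by omega⟩
        · have := hC _ _ c
          refine ⟨if b = N then 0 else b + 1, by split_ifs <;> omega, by split_ifs <;> omega,
            by split_ifs <;> omega, ?_⟩
          refine ((fwd (y := b) (by omega) ?_).tail (c := a) ?_).trans (fwd (by omega) ?_)
          · intro i _ _; exact ⟨Or.inl (by omega), by split_ifs <;> omega, by split_ifs <;> omega⟩
          · exact ⟨by tauto, by split_ifs <;> omega, by split_ifs <;> omega⟩
          · intro i _ _; exact ⟨Or.inl (by omega), by split_ifs <;> omega, by split_ifs <;> omega⟩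

theorem case1 {N : ℕ} {C : ℕ → ℕ → Prop} (hC : ∀ a b, C a b → a + 2 ≤ b ∧ b ≤ N)
    (h0 : C 0 N)
    (h4 : ∀ l : List (ℕ × ℕ), l.length ≤ 3 → ∃ a b, C a b ∧ (a, b) ∉ l) : GoodC N C := by
  obtain ⟨a, b, c1, n1⟩ := h4 [(0, N)] (by simp)
  obtain ⟨a', b', c2, n2⟩ := h4 [(0, N), (a, b)] (by simp)
  obtain ⟨a'', b'', c3, n3⟩ := h4 [(0, N), (a, b), (a', b')] (by simp)
  simp only [List.mem_cons, List.not_mem_nil, Prod.mk.injEq, or_false, not_or] at n1 n2 n3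
  by_contra hcon
  have key : ∀ U : ℕ → ℕ → Prop, ∃ t, t ≤ N ∧ (U a b ↔ (a ≤ t ∧ t < b)) ∧
      (U a' b' ↔ (a' ≤ t ∧ t < b')) ∧ (U a'' b'' ↔ (a'' ≤ t ∧ t < b'')) := by
    intro U
    by_contra hk
    apply hcon
    apply case1_aux hC h0 U
    intro t ht
    by_contra hne
    have E : ∀ p q, C p q → ¬ (p = 0 ∧ q = N) → (U p q ↔ (p ≤ t ∧ t < q)) := by
      intro p q c hn
      constructor
      · intro hu
        by_contra h
        exact hne ⟨p, q, c, hn, Or.inl ⟨hu, h⟩⟩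
      · intro h
        by_contra hu
        exact hne ⟨p, q, c, hn, Or.inr ⟨hu, h⟩⟩
    exact hk ⟨t, ht, E a b c1 n1, E a' b' c2 n2.1, E a'' b'' c3 n3.1⟩
  obtain ⟨t0, -, x1, x2, x3⟩ := key fun _ _ => True
  obtain ⟨t1, -, y1, y2, y3⟩ := key fun i j => i = a ∧ j = b
  obtain ⟨t2, -, z1, z2, z3⟩ := key fun i j => i = a' ∧ j = b'
  obtain ⟨t3, -, w1, w2, w3⟩ := key fun i j => i = a'' ∧ j = b''
  simp only [true_iff, and_self] at x1 x2 x3 y1 z2 w3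
  have y2' : ¬ (a' ≤ t1 ∧ t1 < b') := fun h => n2.2 (y2.2 h)
  have y3' : ¬ (a'' ≤ t1 ∧ t1 < b'') := fun h => n3.2.1 (y3.2 h)
  have z1' : ¬ (a ≤ t2 ∧ t2 < b) := fun h => n2.2 ⟨(z1.2 h).1.symm, (z1.2 h).2.symm⟩
  have z3' : ¬ (a'' ≤ t2 ∧ t2 < b'') := fun h => n3.2.2 (z3.2 h)
  have w1' : ¬ (a ≤ t3 ∧ t3 < b) := fun h => n3.2.1 ⟨(w1.2 h).1.symm, (w1.2 h).2.symm⟩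
  have w2' : ¬ (a' ≤ t3 ∧ t3 < b') := fun h => n3.2.2 ⟨(w2.2 h).1.symm, (w2.2 h).2.symm⟩
  clear key hcon h4 y2 y3 z1 z3 w1 w2 n1 n2 n3 c1 c2 c3 hC h0
  rcases lt_or_ge t1 t0 with h1 | h1 <;> rcases lt_or_ge t2 t0 with h2 | h2 <;>
    rcases lt_or_ge t3 t0 with h3 | h3 <;> omega

theorem fwdA {R : ℕ → ℕ → Prop} {x y w : ℕ} (hw : w < x ∨ y < w)  (h : x ≤ y)
    (H : ∀ i, x ≤ i → i < y → R i (i + 1)) : ReflTransGen (Av R w) x y :=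
  fwd h fun i h1 h2 => ⟨H i h1 h2, by omega, by omega⟩

theorem bwdA {R : ℕ → ℕ → Prop} {x y w : ℕ} (hw : w < y ∨ x < w)  (h : y ≤ x)
    (H : ∀ i, y ≤ i → i < x → R (i + 1) i) : ReflTransGen (Av R w) x y :=
  bwd h fun i h1 h2 => ⟨H i h1 h2, by omega, by omega⟩

theorem oneA {R : ℕ → ℕ → Prop} {x y w : ℕ} (hx : x ≠ w) (hy : y ≠ w)
    (H : R x y) : ReflTransGen (Av R w) x y :=
  ReflTransGen.single ⟨H, hx, hy⟩


/-- path forward, chords backward, except `(p,q)` which is forward -/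
def Flip (N : ℕ) (C : ℕ → ℕ → Prop) (p q : ℕ) : ℕ → ℕ → Prop := fun i j =>
  (j = i + 1 ∧ j ≤ N) ∨ (i = p ∧ j = q) ∨ (C j i ∧ ¬ (j = p ∧ i = q))

theorem flip_good {N : ℕ} {C : ℕ → ℕ → Prop} (hC : ∀ a b, C a b → a + 2 ≤ b ∧ b ≤ N)
    {p q : ℕ} (hpq : C p q)
    (H : ∀ x y, x ≤ N → y < x →
      ∃ w, w ≤ N ∧ w ≠ x ∧ w ≠ y ∧ ReflTransGen (Av (Flip N C p q) w) x y) : GoodC N C := by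
  have e0 := hC _ _ hpq
  refine ⟨Flip N C p q, ?_, ?_, ?_⟩
  · rintro i j (h | ⟨rfl, rfl⟩ | h) <;> tauto
  · intro i j h h'
    have e1 := hC i j
    have e2 := hC j i
    rcases h with h | h | ⟨c, h⟩ <;> rcases h' with h' | h' | ⟨c', h'⟩
    all_goals first | omega | skip
    all_goals first | (have := e1 c'; omega) | (have := e2 c; omega) | (have := e1 c'; have := e2 c; omega)
  · intro x y hx hy hxy
    by_cases hlt : x < y
    · have hf : ∀ i, i < N → Flip N C p q i (i + 1) := fun i hi => Or.inl ⟨rfl, hi⟩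
      by_cases h1 : x = 0
      · by_cases h2 : y = N
        · refine ⟨p + 1, by omega, by omega, by omega, ?_⟩
          refine ((fwdA (y := p) (by omega) (by omega) fun i _ _ => hf i (by omega)).trans
            (oneA (y := q) (by omega) (by omega) (Or.inr (Or.inl ⟨rfl, rfl⟩)))).trans
            (fwdA (by omega) (by omega) fun i _ _ => hf i (by omega))
        · exact ⟨N, by omega, by omega, by omega, fwdA (by omega) (by omega) fun i _ _ => hf i (by omega)⟩
      · exact ⟨0, by omega, by omega, by omega, fwdA (by omega) (by omega) fun i _ _ => hf i (by omega)⟩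
    · exact H x y hx (by omega)

theorem case2_aux {N : ℕ} {C : ℕ → ℕ → Prop} (hC : ∀ a b, C a b → a + 2 ≤ b ∧ b ≤ N)
    {b0 a1 : ℕ} (h0 : C 0 b0) (h1 : C a1 N) (ha : 1 ≤ a1) (hab : a1 ≤ b0) (hb : b0 < N)
    {p q : ℕ} (hpq : C p q) (n1 : ¬ (p = 0 ∧ q = b0)) (n2 : ¬ (p = a1 ∧ q = N))
    (H : (q < a1 ∨ (a1 ≤ p ∧ q ≤ b0) ∨ b0 < p) ∨
      ∃ p' q', C p' q' ∧ ¬ (p' = p ∧ q' = q) ∧ ¬ (p' = 0 ∧ q' = b0) ∧ ¬ (p' = a1 ∧ q' = N) ∧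
       ¬ (q' < a1 ∨ (a1 ≤ p' ∧ q' ≤ b0) ∨ b0 < p')) : GoodC N C := by
  have e0 := hC _ _ hpq
  have e1 := hC _ _ h0
  have e2 := hC _ _ h1
  apply flip_good hC hpq
  intro x y hx hlt
  have hf : ∀ i, i < N → Flip N C p q i (i + 1) := fun i hi => Or.inl ⟨rfl, hi⟩
  have r0 : Flip N C p q b0 0 := Or.inr (Or.inr ⟨h0, by omega⟩)
  have r1 : Flip N C p q N a1 := Or.inr (Or.inr ⟨h1, by omega⟩)
  have rc : Flip N C p q p q := Or.inr (Or.inl ⟨rfl, rfl⟩)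
  have F : ∀ u v w, u ≤ v → v ≤ N → (w < u ∨ v < w) → ReflTransGen (Av (Flip N C p q) w) u v :=
    fun u v w h1 h2 h3 => fwdA h3 h1 fun i _ _ => hf i (by omega)
  by_cases c1 : x ≤ b0
  · refine ⟨N, by omega, by omega, by omega, ?_⟩
    exact ((F x b0 _ (by omega) (by omega) (by omega)).trans (oneA (by omega) (by omega) r0)).trans
      (F 0 y _ (by omega) (by omega) (by omega))
  by_cases c2 : a1 ≤ y
  · refine ⟨0, by omega, by omega, by omega, ?_⟩
    exact ((F x N _ (by omega) (by omega) (by omega)).trans (oneA (by omega) (by omega) r1)).trans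
      (F a1 y _ (by omega) (by omega) (by omega))
  have std : ∀ w, (w < x) → y < w → (w < a1 ∨ b0 < w) →
      ReflTransGen (Av (Flip N C p q) w) x y := fun w g1 g2 g3 =>
    ((((F x N _ (by omega) (by omega) (by omega)).trans (oneA (by omega) (by omega) r1)).trans
      (F a1 b0 _ (by omega) (by omega) (by omega))).trans (oneA (by omega) (by omega) r0)).trans
      (F 0 y _ (by omega) (by omega) (by omega))
  by_cases c3 : y + 1 < a1
  · exact ⟨y + 1, by omega, by omega, by omega, std _ (by omega) (by omega) (by omega)⟩
  by_cases c4 : b0 + 1 < x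
  · exact ⟨b0 + 1, by omega, by omega, by omega, std _ (by omega) (by omega) (by omega)⟩
  rcases H with H | ⟨p', q', hpq', m1, m2, m3, H⟩
  · refine ⟨p + 1, by omega, by omega, by omega, ?_⟩
    rcases H with H | H | H
    · exact ((((((F x N _ (by omega) (by omega) (by omega)).trans (oneA (by omega) (by omega) r1)).trans
        (F a1 b0 _ (by omega) (by omega) (by omega))).trans (oneA (by omega) (by omega) r0)).trans
        (F 0 p _ (by omega) (by omega) (by omega))).trans (oneA (by omega) (by omega) rc)).trans
        (F q y _ (by omega) (by omega) (by omega))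
    · exact ((((((F x N _ (by omega) (by omega) (by omega)).trans (oneA (by omega) (by omega) r1)).trans
        (F a1 p _ (by omega) (by omega) (by omega))).trans (oneA (by omega) (by omega) rc)).trans
        (F q b0 _ (by omega) (by omega) (by omega))).trans (oneA (by omega) (by omega) r0)).trans
        (F 0 y _ (by omega) (by omega) (by omega))
    · exact ((((((F x p _ (by omega) (by omega) (by omega)).trans (oneA (by omega) (by omega) rc)).trans
        (F q N _ (by omega) (by omega) (by omega))).trans (oneA (by omega) (by omega) r1)).trans
        (F a1 b0 _ (by omega) (by omega) (by omega))).trans (oneA (by omega) (by omega) r0)).trans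
        (F 0 y _ (by omega) (by omega) (by omega))
  · have e3 := hC _ _ hpq'
    have rd : Flip N C p q q' p' := Or.inr (Or.inr ⟨hpq', by omega⟩)
    by_cases k1 : b0 < q'
    · by_cases k2 : a1 ≤ p'
      · -- from the top interval to the middle one
        by_cases k3 : q' < N
        · refine ⟨N, by omega, by omega, by omega, ?_⟩
          exact ((((F x q' _ (by omega) (by omega) (by omega)).trans (oneA (by omega) (by omega) rd)).trans
            (F p' b0 _ (by omega) (by omega) (by omega))).trans (oneA (by omega) (by omega) r0)).trans
            (F 0 y _ (by omega) (by omega) (by omega))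
        · refine ⟨a1, by omega, by omega, by omega, ?_⟩
          exact ((((F x q' _ (by omega) (by omega) (by omega)).trans (oneA (by omega) (by omega) rd)).trans
            (F p' b0 _ (by omega) (by omega) (by omega))).trans (oneA (by omega) (by omega) r0)).trans
            (F 0 y _ (by omega) (by omega) (by omega))
      · refine ⟨a1, by omega, by omega, by omega, ?_⟩
        exact ((F x q' _ (by omega) (by omega) (by omega)).trans (oneA (by omega) (by omega) rd)).trans
          (F p' y _ (by omega) (by omega) (by omega))
    · by_cases k3 : q' < b0
      · refine ⟨b0, by omega, by omega, by omega, ?_⟩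
        exact ((((F x N _ (by omega) (by omega) (by omega)).trans (oneA (by omega) (by omega) r1)).trans
          (F a1 q' _ (by omega) (by omega) (by omega))).trans (oneA (by omega) (by omega) rd)).trans
          (F p' y _ (by omega) (by omega) (by omega))
      · refine ⟨0, by omega, by omega, by omega, ?_⟩
        exact ((((F x N _ (by omega) (by omega) (by omega)).trans (oneA (by omega) (by omega) r1)).trans
          (F a1 q' _ (by omega) (by omega) (by omega))).trans (oneA (by omega) (by omega) rd)).trans
          (F p' y _ (by omega) (by omega) (by omega))

theorem case2 {N : ℕ} {C : ℕ → ℕ → Prop} (hC : ∀ a b, C a b → a + 2 ≤ b ∧ b ≤ N)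
    {b0 a1 : ℕ} (h0 : C 0 b0) (h1 : C a1 N) (ha : 1 ≤ a1) (hab : a1 ≤ b0) (hb : b0 < N)
    (h4 : ∀ l : List (ℕ × ℕ), l.length ≤ 3 → ∃ a b, C a b ∧ (a, b) ∉ l) : GoodC N C := by
  obtain ⟨p, q, c1, n1⟩ := h4 [(0, b0), (a1, N)] (by simp)
  obtain ⟨p', q', c2, n2⟩ := h4 [(0, b0), (a1, N), (p, q)] (by simp)
  simp only [List.mem_cons, List.not_mem_nil, Prod.mk.injEq, or_false, not_or] at n1 n2
  by_cases h : p' < q' ∧ (q' < a1 ∨ (a1 ≤ p' ∧ q' ≤ b0) ∨ b0 < p')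
  · exact case2_aux hC h0 h1 ha hab hb c2 n2.1 n2.2.1 (Or.inl h.2)
  · have := hC _ _ c2
    exact case2_aux hC h0 h1 ha hab hb c1 n1.1 n1.2 
      (Or.inr ⟨p', q', c2, n2.2.2, n2.1, n2.2.1, fun h' => h ⟨by omega, h'⟩⟩)

/-- three cycles in a chain, plus one more chord -/
theorem case3 {N : ℕ} {C : ℕ → ℕ → Prop} (hC : ∀ a b, C a b → a + 2 ≤ b ∧ b ≤ N)
    {b0 c0 : ℕ} (h0 : C 0 b0) (h1 : C b0 c0) (h2 : C c0 N) 
    (h4 : ∀ l : List (ℕ × ℕ), l.length ≤ 3 → ∃ a b, C a b ∧ (a, b) ∉ l) : GoodC N C := by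
  obtain ⟨p, q, hpq, n1⟩ := h4 [(0, b0), (b0, c0), (c0, N)] (by simp)
  simp only [List.mem_cons, List.not_mem_nil, Prod.mk.injEq, or_false, not_or] at n1
  have e1 := hC _ _ h0
  have e2 := hC _ _ h1
  have e3 := hC _ _ h2
  apply flip_good hC hpq
  intro x y hx hlt
  have r0 : Flip N C p q b0 0 := Or.inr (Or.inr ⟨h0, by omega⟩)
  have r1 : Flip N C p q c0 b0 := Or.inr (Or.inr ⟨h1, by omega⟩)
  have r2 : Flip N C p q N c0 := Or.inr (Or.inr ⟨h2, by omega⟩)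
  have F : ∀ u v w, u ≤ v → v ≤ N → (w < u ∨ v < w) → ReflTransGen (Av (Flip N C p q) w) u v :=
    fun u v w h1 h2 h3 => fwdA h3 h1 fun i _ _ => Or.inl ⟨rfl, by omega⟩
  by_cases k1 : x ≤ c0
  · refine ⟨N, by omega, by omega, by omega, ?_⟩
    by_cases k2 : x ≤ b0
    · exact ((F x b0 _ (by omega) (by omega) (by omega)).trans (oneA (by omega) (by omega) r0)).trans
        (F 0 y _ (by omega) (by omega) (by omega))
    · have k : ReflTransGen (Av (Flip N C p q) N) x b0 := 
        (F x c0 _ (by omega) (by omega) (by omega)).trans (oneA (by omega) (by omega) r1)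
      by_cases k3 : b0 ≤ y
      · exact k.trans (F b0 y _ (by omega) (by omega) (by omega))
      · exact (k.trans (oneA (by omega) (by omega) r0)).trans (F 0 y _ (by omega) (by omega) (by omega))
  · have k : ∀ w, w < c0 → ReflTransGen (Av (Flip N C p q) w) x c0 := fun w hw =>
        (F x N _ (by omega) (by omega) (by omega)).trans (oneA (by omega) (by omega) r2)
    by_cases k3 : c0 ≤ y
    · exact ⟨0, by omega, by omega, by omega, (k 0 (by omega)).trans (F c0 y _ (by omega) (by omega) (by omega))⟩
    · by_cases k4 : b0 ≤ y
      · exact ⟨0, by omega, by omega, by omega, ((k 0 (by omega)).trans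
          (oneA (by omega) (by omega) r1)).trans (F b0 y _ (by omega) (by omega) (by omega))⟩
      · exact ⟨b0 + 1, by omega, by omega, by omega, (((k _ (by omega)).trans
          (oneA (by omega) (by omega) r1)).trans (oneA (by omega) (by omega) r0)).trans
          (F 0 y _ (by omega) (by omega) (by omega))⟩


set_option maxHeartbeats 2000000 in
theorem earCase {N : ℕ} {C : ℕ → ℕ → Prop} (hC : ∀ a b, C a b → a + 2 ≤ b ∧ b ≤ N)
    {b0 a1 b1 c0 d1 : ℕ} (h0 : C 0 b0) (h1 : C a1 b1) (h2 : C c0 N) (ha : 1 ≤ a1) (hab : a1 < b0)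
    (hb : b0 < b1) (hbd : b1 ≤ d1) (hbc : b0 < c0) (hcd : c0 ≤ d1) (hd : d1 < N)
    (hav : ∀ v, b0 < v → v ≤ d1 → ∃ a b, C a b ∧ (a = a1 ∨ b0 < a) ∧ a < v ∧ v ≤ b ∧ b ≤ d1) :
    GoodC N C := by
  have e0 := hC _ _ h0
  have e1 := hC _ _ h1
  have e2 := hC _ _ h2
  obtain ⟨R, hR⟩ : ∃ R : ℕ → ℕ → Prop, R = fun i j => (i = j + 1 ∧ i ≤ a1) ∨ (i = 0 ∧ j = b0) ∨
    (j = i + 1 ∧ a1 ≤ i ∧ j ≤ d1) ∨ (i = c0 ∧ j = N) ∨ (i = j + 1 ∧ d1 ≤ j ∧ i ≤ N) ∨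
    (C j i ∧ a1 ≤ j ∧ i ≤ d1) := ⟨_, rfl⟩
  have r0 : R 0 b0 := by subst hR; exact Or.inr (Or.inl ⟨rfl, rfl⟩)
  have r2 : R c0 N := by subst hR; exact Or.inr (Or.inr (Or.inr (Or.inl ⟨rfl, rfl⟩)))
  have rC : ∀ i j, C j i → a1 ≤ j → i ≤ d1 → R i j := by
    subst hR; exact fun i j h h1 h2 => Or.inr (Or.inr (Or.inr (Or.inr (Or.inr ⟨h, h1, h2⟩))))
  have F : ∀ u v w, u ≤ v → a1 ≤ u → v ≤ d1 → (w < u ∨ v < w) → ReflTransGen (Av R w) u v := by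
    subst hR
    exact fun u v w h1 h2 h3 h4 => fwdA h4 h1 fun i _ _ => by omega
  have BL : ∀ u v w, v ≤ u → u ≤ a1 → (w < v ∨ u < w) → ReflTransGen (Av R w) u v := by
    subst hR
    exact fun u v w h1 h2 h4 => bwdA h4 h1 fun i _ _ => by omega
  have BR : ∀ u v w, v ≤ u → d1 ≤ v → u ≤ N → (w < v ∨ u < w) → ReflTransGen (Av R w) u v := by
    subst hR
    exact fun u v w h1 h2 h3 h4 => bwdA h4 h1 fun i _ _ => by omega
  have core : ∀ w, (w < a1 ∨ d1 < w) → ∀ v, (a1 ≤ v ∧ v ≤ d1) → ReflTransGen (Av R w) v a1 := by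
    intro w hw
    apply backreach
    rintro v ⟨hv1, hv2⟩
    by_cases hv : v = a1
    · exact Or.inl hv
    right
    by_cases hvb : v ≤ b0
    · refine ⟨a1, b1, by omega, by omega, by omega, ⟨rC _ _ h1 (by omega) (by omega), by omega, by omega⟩, ?_⟩
      intro i _ _
      refine ⟨?_, by omega, by omega⟩
      subst hR; omega
    · obtain ⟨a, b, g1, g2, g3, g4, g5⟩ := hav v (by omega) hv2
      refine ⟨a, b, by omega, by omega, by omega, ⟨rC _ _ g1 (by omega) (by omega), by omega, by omega⟩, ?_⟩
      intro i _ _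
      refine ⟨?_, by omega, by omega⟩
      subst hR; omega
  have core' : ∀ v, (v = a1 ∨ (b0 < v ∧ v ≤ d1)) → ReflTransGen (Av R b0) v a1 := by
    apply backreach
    rintro v (hv | ⟨hv1, hv2⟩)
    · exact Or.inl hv
    right
    obtain ⟨a, b, g1, g2, g3, g4, g5⟩ := hav v (by omega) hv2
    refine ⟨a, b, by omega, by omega, by omega, ⟨rC _ _ g1 (by omega) (by omega), by omega, by omega⟩, ?_⟩
    intro i _ _
    refine ⟨?_, by omega, by omega⟩
    subst hR; omega
  refine ⟨R, ?_, ?_, ?_⟩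
  · subst hR
    rintro i j (h | ⟨rfl, rfl⟩ | h | ⟨rfl, rfl⟩ | h | h)
    · omega
    · exact Or.inr (Or.inr (Or.inl h0))
    · omega
    · exact Or.inr (Or.inr (Or.inl h2))
    · omega
    · exact Or.inr (Or.inr (Or.inr h.1))
  · subst hR
    intro i j h h'
    have k1 := hC i j
    have k2 := hC j i
    rcases h with h | h | h | h | h | ⟨c, h⟩ <;> rcases h' with h' | h' | h' | h' | h' | ⟨c', h'⟩
    all_goals first | omega | (have := k1 c'; omega) | (have := k2 c; omega) | (have := k1 c'; have := k2 c; omega)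
  · intro x y hx hy hxy
    by_cases p1 : x ≤ d1 ∧ y ≤ d1
    · refine ⟨N, by omega, by omega, by omega, ReflTransGen.trans (b := a1) ?_ ?_⟩
      · by_cases p2 : a1 ≤ x
        · exact core _ (by omega) _ ⟨p2, p1.1⟩
        · exact ((BL x 0 _ (by omega) (by omega) (by omega)).trans (oneA (by omega) (by omega) r0)).trans
            (core _ (by omega) _ ⟨by omega, by omega⟩)
      · by_cases p2 : a1 ≤ y
        · exact F _ _ _ (by omega) (by omega) (by omega) (by omega)
        · exact BL _ _ _ (by omega) (by omega) (by omega)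
    by_cases p2 : a1 ≤ x ∧ a1 ≤ y
    · refine ⟨0, by omega, by omega, by omega, ReflTransGen.trans (b := a1) ?_ ?_⟩
      · by_cases p2 : x ≤ d1
        · exact core _ (by omega) _ ⟨by omega, by omega⟩
        · exact (BR x d1 _ (by omega) (by omega) (by omega) (by omega)).trans
            (core _ (by omega) _ ⟨by omega, by omega⟩)
      · by_cases p2 : y ≤ d1
        · exact F _ _ _ (by omega) (by omega) (by omega) (by omega)
        · exact ((F a1 c0 _ (by omega) (by omega) (by omega) (by omega)).trans
            (oneA (by omega) (by omega) r2)).trans (BR N y _ (by omega) (by omega) (by omega) (by omega))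
    by_cases p3 : x < a1
    · refine ⟨a1, by omega, by omega, by omega, ?_⟩
      exact ((((BL x 0 _ (by omega) (by omega) (by omega)).trans (oneA (by omega) (by omega) r0)).trans
        (F b0 c0 _ (by omega) (by omega) (by omega) (by omega))).trans
            (oneA (by omega) (by omega) r2)).trans (BR N y _ (by omega) (by omega) (by omega) (by omega))
    · refine ⟨b0, by omega, by omega, by omega, ?_⟩
      exact ((BR x d1 _ (by omega) (by omega) (by omega) (by omega)).trans
        (core' _ (by omega))).trans (BL a1 y _ (by omega) (by omega) (by omega))

set_option maxHeartbeats 2000000 in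
theorem revCase {N : ℕ} {C : ℕ → ℕ → Prop} (hC : ∀ a b, C a b → a + 2 ≤ b ∧ b ≤ N)
    {b0 b1 a2 c0 : ℕ} (h0 : C 0 b0) (h1 : C b0 b1) (h2 : C c0 N) (ha : b0 < a2) (hab : a2 ≤ b1)
    (hb : b1 ≤ c0)
    (hcov : ∀ v, a2 < v → v ≤ c0 → ∃ a b, C a b ∧ a2 ≤ a ∧ a < v ∧ v ≤ b ∧ b ≤ c0)
    (w0 : ℕ) (hw0 : a2 < w0 ∧ w0 < c0) (P : ℕ → Prop) (hP : P c0)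
    (hav : ∀ v, P v → v = a2 ∨ ∃ a b, C a b ∧ a2 ≤ a ∧ a < v ∧ v ≤ b ∧ b ≤ c0 ∧ P a ∧ a ≠ w0 ∧
      (b < w0 ∨ w0 < v)) :
    GoodC N C := by
  have e0 := hC _ _ h0
  have e1 := hC _ _ h1
  have e2 := hC _ _ h2
  obtain ⟨R, hR⟩ : ∃ R : ℕ → ℕ → Prop, R = fun i j => (j = i + 1 ∧ j ≤ b0) ∨ (i = b0 ∧ j = 0) ∨
    (i = b0 ∧ j = b1) ∨ (i = j + 1 ∧ b0 ≤ j ∧ i ≤ a2) ∨ (j = i + 1 ∧ a2 ≤ i ∧ j ≤ N) ∨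
    (C j i ∧ a2 ≤ j) := ⟨_, rfl⟩
  have r0 : R b0 0 := by subst hR; exact Or.inr (Or.inl ⟨rfl, rfl⟩)
  have r1 : R b0 b1 := by subst hR; exact Or.inr (Or.inr (Or.inl ⟨rfl, rfl⟩))
  have rC : ∀ i j, C j i → a2 ≤ j → R i j := by
    subst hR; exact fun i j h h1 => Or.inr (Or.inr (Or.inr (Or.inr (Or.inr ⟨h, h1⟩))))
  have r2 : R N c0 := rC _ _ h2 (by omega)
  have FL : ∀ u v w, u ≤ v → v ≤ b0 → (w < u ∨ v < w) → ReflTransGen (Av R w) u v := by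
    subst hR
    exact fun u v w h1 h2 h4 => fwdA h4 h1 fun i _ _ => by omega
  have FR : ∀ u v w, u ≤ v → a2 ≤ u → v ≤ N → (w < u ∨ v < w) → ReflTransGen (Av R w) u v := by
    subst hR
    exact fun u v w h1 h2 h3 h4 => fwdA h4 h1 fun i _ _ => by omega
  have B : ∀ u v w, v ≤ u → b0 ≤ v → u ≤ a2 → (w < v ∨ u < w) → ReflTransGen (Av R w) u v := by
    subst hR
    exact fun u v w h1 h2 h3 h4 => bwdA h4 h1 fun i _ _ => by omega
  have core : ∀ w, (w < a2 ∨ c0 < w) → ∀ v, (a2 ≤ v ∧ v ≤ c0) → ReflTransGen (Av R w) v a2 := by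
    intro w hw
    apply backreach
    rintro v ⟨hv1, hv2⟩
    by_cases hv : v = a2
    · exact Or.inl hv
    right
    obtain ⟨a, b, g1, g2, g3, g4, g5⟩ := hcov v (by omega) hv2
    refine ⟨a, b, by omega, by omega, by omega, ⟨rC _ _ g1 (by omega), by omega, by omega⟩, ?_⟩
    intro i _ _
    refine ⟨?_, by omega, by omega⟩
    subst hR; omega
  have core' : ReflTransGen (Av R w0) c0 a2 := by
    refine backreach P a2 ?_ c0 hP
    intro v hv
    rcases hav v hv with hv | ⟨a, b, g1, g2, g3, g4, g5, g6, g7, g8⟩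
    · exact Or.inl hv
    right
    refine ⟨a, b, by omega, by omega, g6, ⟨rC _ _ g1 (by omega), by omega, by omega⟩, ?_⟩
    intro i _ _
    refine ⟨?_, by omega, by omega⟩
    subst hR; omega
  refine ⟨R, ?_, ?_, ?_⟩
  · subst hR
    rintro i j (h | ⟨rfl, rfl⟩ | ⟨rfl, rfl⟩ | h | h | h)
    · omega
    · exact Or.inr (Or.inr (Or.inr h0))
    · exact Or.inr (Or.inr (Or.inl h1))
    · omega
    · omega
    · exact Or.inr (Or.inr (Or.inr h.1))
  · subst hR
    intro i j h h'
    have k1 := hC i j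
    have k2 := hC j i
    rcases h with h | h | h | h | h | ⟨c, h⟩ <;> rcases h' with h' | h' | h' | h' | h' | ⟨c', h'⟩
    all_goals first | omega | (have := k1 c'; omega) | (have := k2 c; omega) | (have := k1 c'; have := k2 c; omega)
  · intro x y hx hy hxy
    have mid : ∀ w, w < b0 ∨ c0 < w → ReflTransGen (Av R w) b0 a2 := fun w hw =>
      (oneA (by omega) (by omega) r1).trans (core _ (by omega) _ ⟨by omega, by omega⟩)
    by_cases p1 : x ≤ c0 ∧ y ≤ c0
    · refine ⟨N, by omega, by omega, by omega, ReflTransGen.trans (b := a2) ?_ ?_⟩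
      · by_cases p2 : a2 ≤ x
        · exact core _ (by omega) _ ⟨p2, p1.1⟩
        · refine ReflTransGen.trans (b := b0) ?_ (mid _ (by omega))
          by_cases p3 : b0 ≤ x
          · exact B _ _ _ (by omega) (by omega) (by omega) (by omega)
          · exact FL _ _ _ (by omega) (by omega) (by omega)
      · by_cases p2 : a2 ≤ y
        · exact FR _ _ _ (by omega) (by omega) (by omega) (by omega)
        · by_cases p3 : b0 ≤ y
          · exact B _ _ _ (by omega) (by omega) (by omega) (by omega)
          · exact ((B a2 b0 _ (by omega) (by omega) (by omega) (by omega)).trans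
              (oneA (by omega) (by omega) r0)).trans (FL _ _ _ (by omega) (by omega) (by omega))
    by_cases p2 : b0 ≤ x ∧ b0 ≤ y
    · refine ⟨0, by omega, by omega, by omega, ReflTransGen.trans (b := a2) ?_ ?_⟩
      · by_cases p2 : a2 ≤ x
        · by_cases p3 : x ≤ c0
          · exact core _ (by omega) _ ⟨by omega, by omega⟩
          · exact ((FR x N _ (by omega) (by omega) (by omega) (by omega)).trans
              (oneA (by omega) (by omega) r2)).trans (core _ (by omega) _ ⟨by omega, by omega⟩)
        · exact (B x b0 _ (by omega) (by omega) (by omega) (by omega)).trans (mid _ (by omega))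
      · by_cases p2 : a2 ≤ y
        · exact FR _ _ _ (by omega) (by omega) (by omega) (by omega)
        · exact B _ _ _ (by omega) (by omega) (by omega) (by omega)
    by_cases p3 : x < b0
    · refine ⟨b0 + 1, by omega, by omega, by omega, ?_⟩
      exact ((FL x b0 _ (by omega) (by omega) (by omega)).trans (oneA (by omega) (by omega) r1)).trans
        (FR b1 y _ (by omega) (by omega) (by omega) (by omega))
    · refine ⟨w0, by omega, by omega, by omega, ?_⟩
      exact (((((FR x N _ (by omega) (by omega) (by omega) (by omega)).trans
        (oneA (by omega) (by omega) r2)).trans core').trans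
        (B a2 b0 _ (by omega) (by omega) (by omega) (by omega))).trans
        (oneA (by omega) (by omega) r0)).trans (FL 0 y _ (by omega) (by omega) (by omega))


def Mir (N : ℕ) (C : ℕ → ℕ → Prop) : ℕ → ℕ → Prop :=
  fun a b => a ≤ N ∧ b ≤ N ∧ C (N - b) (N - a)

theorem mirror_mk {N : ℕ} {C : ℕ → ℕ → Prop} (hC : ∀ a b, C a b → a + 2 ≤ b ∧ b ≤ N) {a b : ℕ}
    (h : C a b) : Mir N C (N - b) (N - a) := by
  have e := hC _ _ h
  refine ⟨by omega, by omega, ?_⟩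
  rw [show N - (N - a) = a by omega, show N - (N - b) = b by omega]
  exact h

theorem mirror_hC {N : ℕ} {C : ℕ → ℕ → Prop} (hC : ∀ a b, C a b → a + 2 ≤ b ∧ b ≤ N) :
    ∀ a b, Mir N C a b → a + 2 ≤ b ∧ b ≤ N := by
  rintro a b ⟨h1, h2, h3⟩
  have e := hC _ _ h3
  omega

theorem mirror_cov {N : ℕ} {C : ℕ → ℕ → Prop} (hC : ∀ a b, C a b → a + 2 ≤ b ∧ b ≤ N)
    (hcov : ∀ i, i < N → ∃ a b, C a b ∧ a ≤ i ∧ i < b) :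
    ∀ i, i < N → ∃ a b, Mir N C a b ∧ a ≤ i ∧ i < b := by
  intro i hi
  obtain ⟨a, b, h, h1, h2⟩ := hcov (N - 1 - i) (by omega)
  have e := hC _ _ h
  exact ⟨_, _, mirror_mk hC h, by omega, by omega⟩

theorem earLem {N : ℕ} {C : ℕ → ℕ → Prop} (hC : ∀ a b, C a b → a + 2 ≤ b ∧ b ≤ N)
    (hcov : ∀ i, i < N → ∃ a b, C a b ∧ a ≤ i ∧ i < b)
    {b0 a1 b1 c1 d1 c0 : ℕ} (h0 : C 0 b0) (h1 : C a1 b1) (h2 : C c1 d1) (h3 : C c0 N)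
    (ha1 : 1 ≤ a1) (hab : a1 < b0) (hb : b0 < b1) (hbc : b1 < c0) (hbc1 : b0 < c1) (hcc : c1 < c0)
    (hcd : c0 ≤ d1) (hd : d1 < N) (hm : ∀ a b, C a b → a ≤ b0 → b ≤ b1)
    (hm' : ∀ a b, C a b → c0 ≤ b → c1 ≤ a) : GoodC N C := by
  refine earCase hC h0 h1 h3 ha1 hab hb (d1 := d1) (by omega) (by omega) hcd hd ?_
  intro v hv1 hv2
  by_cases q1 : c1 < v
  · exact ⟨c1, d1, h2, by omega, q1, hv2, le_rfl⟩
  by_cases q2 : v ≤ b1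
  · exact ⟨a1, b1, h1, by omega, by omega, q2, by omega⟩
  obtain ⟨a, b, h, g1, g2⟩ := hcov (v - 1) (by omega)
  have m1 := hm _ _ h
  have m2 := hm' _ _ h
  exact ⟨a, b, h, by omega, by omega, by omega, by omega⟩

/-- a chord with maximal right end among those satisfying a property -/
theorem maxChord {N : ℕ} {C : ℕ → ℕ → Prop} (hC : ∀ a b, C a b → a + 2 ≤ b ∧ b ≤ N)
    (Q : ℕ → Prop) {a b : ℕ} (h : C a b) (hQ : Q a) :
    ∃ a' b', C a' b' ∧ Q a' ∧ ∀ x y, C x y → Q x → y ≤ b' := by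
  classical
  have hex : ∃ b', b' ≤ N ∧ (∃ a', C a' b' ∧ Q a') ∧ ∀ x y, C x y → Q x → y ≤ b' := by
    by_contra hcon
    push Not at hcon
    have : ∀ k, ∃ x y, C x y ∧ Q x ∧ k ≤ y := by
      intro k
      induction k with
      | zero => exact ⟨a, b, h, hQ, by omega⟩
      | succ k ih =>
        obtain ⟨x, y, h1, h2, h3⟩ := ih
        obtain ⟨x', y', h4, h5, h6⟩ := hcon y (hC _ _ h1).2 ⟨x, h1, h2⟩
        exact ⟨x', y', h4, h5, by omega⟩
    obtain ⟨x, y, h1, h2, h3⟩ := this (N + 1)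
    have := hC _ _ h1
    omega
  obtain ⟨b', -, ⟨a', h1, h2⟩, h3⟩ := hex
  exact ⟨a', b', h1, h2, h3⟩

/-- a chord with minimal left end among those satisfying a property -/
theorem minChord {C : ℕ → ℕ → Prop}
    (Q : ℕ → Prop) {a b : ℕ} (h : C a b) (hQ : Q b) :
    ∃ a' b', C a' b' ∧ Q b' ∧ ∀ x y, C x y → Q y → a' ≤ x := by
  classical
  have hex : ∃ a', ∃ b', C a' b' ∧ Q b' := ⟨a, b, h, hQ⟩
  obtain ⟨b', h1, h2⟩ := Nat.find_spec hex
  exact ⟨_, b', h1, h2, fun x y hx hy => Nat.find_min' hex ⟨y, hx, hy⟩⟩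

theorem betaLem {N : ℕ} {C : ℕ → ℕ → Prop} (hC : ∀ a b, C a b → a + 2 ≤ b ∧ b ≤ N)
    (hcov : ∀ i, i < N → ∃ a b, C a b ∧ a ≤ i ∧ i < b)
    {b0 b1 c2 c1 c0 : ℕ} (h0 : C 0 b0) (h1 : C b0 b1) (h2 : C c1 c0) (h3 : C c0 N)
    (h4 : C c2 c1) (hbc : b1 < c1)
    (hm : ∀ a b, C a b → a ≤ b0 → b ≤ b1)
    (hm' : ∀ a b, C a b → c0 ≤ b → c1 ≤ a)
    (hm2 : ∀ a b, C a b → c1 ≤ b → c2 ≤ a) : GoodC N C := by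
  have e0 := hC _ _ h0
  have e1 := hC _ _ h1
  have e2 := hC _ _ h2
  have e3 := hC _ _ h3
  have e4 := hC _ _ h4
  have m4 := hm _ _ h4
  by_cases q : c2 ≤ b1
  · refine revCase hC h0 h1 h3 (a2 := c2) (by omega) q (by omega) ?_ (c1 + 1) (by omega)
      (fun v => v = c0 ∨ v = c1 ∨ v = c2) (Or.inl rfl) ?_
    · intro v hv1 hv2
      by_cases q1 : c1 < v
      · exact ⟨c1, c0, h2, by omega, q1, hv2, le_rfl⟩
      · exact ⟨c2, c1, h4, le_rfl, hv1, by omega, by omega⟩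
    · rintro v (rfl | rfl | rfl)
      · exact Or.inr ⟨c1, v, h2, by omega, by omega, le_rfl, le_rfl, Or.inr (Or.inl rfl), by omega,
          by omega⟩
      · exact Or.inr ⟨c2, v, h4, by omega, by omega, le_rfl, by omega, Or.inr (Or.inr rfl), by omega,
          by omega⟩
      · exact Or.inl rfl
  · obtain ⟨a, b, h, g1, g2⟩ := hcov b1 (by omega)
    obtain ⟨a2, b2, h5, ha2, hmm⟩ := maxChord hC (fun x => x ≤ b1) h g1
    have l := hmm _ _ h g1
    have e5 := hC _ _ h5
    have m5 := hm _ _ h5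
    have m5' := hm2 _ _ h5
    have key : ∀ v, a2 < v → v ≤ c1 → ∃ a b, C a b ∧ a2 ≤ a ∧ a < v ∧ v ≤ b ∧ b ≤ c1 := by
      intro v hv1 hv2
      by_cases p1 : c2 < v
      · exact ⟨c2, c1, h4, by omega, by omega, by omega, by omega⟩
      by_cases p2 : v ≤ b2
      · exact ⟨a2, b2, h5, by omega, by omega, by omega, by omega⟩
      obtain ⟨a, b, h, g1, g2⟩ := hcov (v - 1) (by omega)
      have m1 := hmm _ _ h
      have m2 := hm2 _ _ h
      exact ⟨a, b, h, by omega, by omega, by omega, by omega⟩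
    refine revCase hC h0 h1 h3 (a2 := a2) (by omega) ha2 (by omega) ?_ (c1 + 1) (by omega)
      (fun v => v = c0 ∨ (a2 ≤ v ∧ v ≤ c1)) (Or.inl rfl) ?_
    · intro v hv1 hv2
      by_cases q1 : c1 < v
      · exact ⟨c1, c0, h2, by omega, q1, hv2, le_rfl⟩
      · obtain ⟨a, b, h, k⟩ := key v hv1 (by omega)
        exact ⟨a, b, h, by omega, by omega, by omega, by omega⟩
    · rintro v (rfl | ⟨hv1, hv2⟩)
      · exact Or.inr ⟨c1, v, h2, by omega, by omega, le_rfl, le_rfl, Or.inr (by omega), by omega,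
          by omega⟩
      · rcases Nat.eq_or_lt_of_le hv1 with rfl | hv1
        · exact Or.inl rfl
        · obtain ⟨a, b, h, k⟩ := key v hv1 (by omega)
          exact Or.inr ⟨a, b, h, by omega, by omega, by omega, by omega, Or.inr (by omega), by omega,
          by omega⟩

theorem coreThm {N : ℕ} {C : ℕ → ℕ → Prop} (hC : ∀ a b, C a b → a + 2 ≤ b ∧ b ≤ N)
    (hcov : ∀ i, i < N → ∃ a b, C a b ∧ a ≤ i ∧ i < b) (hN : 1 ≤ N)
    (h4 : ∀ l : List (ℕ × ℕ), l.length ≤ 3 → ∃ a b, C a b ∧ (a, b) ∉ l) : GoodC N C := by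
  obtain ⟨a, b, h, g1, g2⟩ := hcov 0 (by omega)
  obtain ⟨a', b0, h0, hz, mb0⟩ := maxChord hC (fun x => x = 0) h (by omega)
  subst hz
  by_cases q : b0 = N
  · subst q; exact case1 hC h0 h4
  obtain ⟨a, b, h, g1, g2⟩ := hcov (N - 1) (by omega)
  have e := hC _ _ h
  obtain ⟨c0, b', h3, hz, mc0⟩ := minChord (fun x => x = N) h (by omega)
  subst hz
  have e0 := hC _ _ h0
  have e3 := hC _ _ h3
  have c0pos : 1 ≤ c0 := by
    by_contra hcon
    obtain rfl : c0 = 0 := by omega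
    have := mb0 _ _ h3 rfl
    omega
  by_cases q1 : c0 ≤ b0
  · exact case2 hC h0 h3 c0pos q1 (by omega) h4
  by_cases q2 : ∃ a b, C a b ∧ a ≤ b0 ∧ c0 ≤ b
  · obtain ⟨a, b, h, g1, g2⟩ := q2
    have e := hC _ _ h
    have m1 := mb0 _ _ h
    have m2 := mc0 _ _ h
    by_cases q3 : a < b0
    · exact earCase hC h0 h h3 (by omega) q3 (by omega) (d1 := b) le_rfl (by omega) (by omega)
        (by omega) fun v hv1 hv2 => ⟨a, b, h, Or.inl rfl, by omega, hv2, le_rfl⟩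
    by_cases q4 : c0 < b
    · apply mirror
      refine earCase (mirror_hC hC) (b0 := b' - c0) (c0 := b' - b0) (a1 := b' - b) (b1 := b' - a)
        (d1 := b' - a) ?_ (mirror_mk hC h) ?_ (by omega) (by omega) (by omega) le_rfl (by omega)
        (by omega)
        (by omega) fun v hv1 hv2 => ⟨b' - b, b' - a, mirror_mk hC h, Or.inl rfl, by omega, hv2, le_rfl⟩
      · have := mirror_mk hC h3
        rwa [Nat.sub_self] at this
      · exact mirror_mk hC h0
    obtain rfl : a = b0 := by omega
    obtain rfl : b = c0 := by omega
    exact case3 hC h0 h h3 h4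
  push Not at q2
  obtain ⟨a, b, h, g1, g2⟩ := hcov b0 (by omega)
  obtain ⟨a1, b1, h1, ha1, hm⟩ := maxChord hC (fun x => x ≤ b0) h g1
  have l1 := hm _ _ h g1
  have l2 := q2 _ _ h1 ha1
  have l3 := mb0 _ _ h1
  obtain ⟨a, b, h, g1, g2⟩ := hcov (c0 - 1) (by omega)
  obtain ⟨c1, d1, h2, hd1, hm'⟩ := minChord (fun x => c0 ≤ x) h (by omega)
  have l4 := hm' _ _ h (by omega)
  have l5 := mt (q2 _ _ h2) (by omega)
  have l6 := mc0 _ _ h2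
  have e1 := hC _ _ h1
  have e2 := hC _ _ h2
  by_cases q3 : a1 < b0
  · exact earLem hC hcov h0 h1 h2 h3 (by omega) q3 (by omega) l2 (by omega) (by omega) hd1 (by omega)
      hm hm'
  have h3' := mirror_mk hC h3
  rw [Nat.sub_self] at h3'
  have mhm : ∀ a b, Mir b' C a b → a ≤ b' - c0 → b ≤ b' - c1 := by
    rintro a b ⟨k1, k2, k3⟩ k4
    have := hm' _ _ k3 (by omega)
    omega
  have mhm' : ∀ a b, Mir b' C a b → b' - b0 ≤ b → b' - b1 ≤ a := by
    rintro a b ⟨k1, k2, k3⟩ k4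
    have := hm _ _ k3 (by omega)
    omega
  by_cases q4 : c0 < d1
  · apply mirror
    exact earLem (mirror_hC hC) (mirror_cov hC hcov) h3' (mirror_mk hC h2) (mirror_mk hC h1)
      (mirror_mk hC h0) (by omega) (by omega) (by omega) (by omega) (by omega) (by omega) (by omega)
      (by omega) mhm mhm'
  obtain rfl : a1 = b0 := by omega
  obtain rfl : d1 = c0 := by omega
  by_cases q5 : c1 ≤ b1
  · refine revCase hC h0 h1 h3 (a2 := c1) (by omega) q5 (by omega) ?_ (c1 + 1) (by omega)
      (fun v => v = d1 ∨ v = c1) (Or.inl rfl) ?_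
    · intro v hv1 hv2
      exact ⟨c1, d1, h2, le_rfl, hv1, hv2, le_rfl⟩
    · rintro v (rfl | rfl)
      · exact Or.inr ⟨c1, v, h2, by omega, by omega, le_rfl, le_rfl, Or.inr rfl, by omega, by omega⟩
      · exact Or.inl rfl
  obtain ⟨a, b, h, g1, g2⟩ := hcov b1 (by omega)
  obtain ⟨a2, b2, h5, ha2, hm2⟩ := maxChord hC (fun x => x ≤ b1) h g1
  have l7 := hm2 _ _ h g1
  have l8 := hm _ _ h5
  have l9 := hm' _ _ h5
  by_cases q6 : a2 < b1
  · have key : ∀ v, a2 < v → v ≤ d1 → ∃ a b, C a b ∧ a2 ≤ a ∧ a < v ∧ v ≤ b ∧ b ≤ d1 ∧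
        (b1 < v → (a = a2 ∨ b1 < a)) := by
      intro v hv1 hv2
      by_cases p1 : c1 < v
      · exact ⟨c1, d1, h2, by omega, by omega, by omega, by omega, by omega⟩
      by_cases p2 : v ≤ b2
      · exact ⟨a2, b2, h5, by omega, by omega, by omega, by omega, by omega⟩
      obtain ⟨a, b, h, g1, g2⟩ := hcov (v - 1) (by omega)
      have m1 := hm2 _ _ h
      have m2 := hm' _ _ h
      exact ⟨a, b, h, by omega, by omega, by omega, by omega, by omega⟩
    refine revCase hC h0 h1 h3 (a2 := a2) (by omega) (by omega) (by omega) ?_ b1 (by omega)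
      (fun v => v = a2 ∨ (b1 < v ∧ v ≤ d1)) (Or.inr (by omega)) ?_
    · intro v hv1 hv2
      obtain ⟨a, b, h, k⟩ := key v hv1 hv2
      exact ⟨a, b, h, by omega, by omega, by omega, by omega⟩
    · rintro v (rfl | ⟨hv1, hv2⟩)
      · exact Or.inl rfl
      · obtain ⟨a, b, h, k⟩ := key v (by omega) hv2
        exact Or.inr ⟨a, b, h, by omega, by omega, by omega, by omega, by omega, by omega, by omega⟩
  · obtain rfl : a2 = b1 := by omega
    apply mirror
    refine betaLem (mirror_hC hC) (mirror_cov hC hcov) h3' (mirror_mk hC h2) (mirror_mk hC h1)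
      (mirror_mk hC h0) (mirror_mk hC h5) (by omega) mhm mhm' ?_
    rintro a b ⟨k1, k2, k3⟩ k4
    have := hm2 _ _ k3 (by omega)
    omega


theorem rtg_cross {α : Type*} {S : α → α → Prop} (P : α → Prop) {x y : α}
    (h : ReflTransGen S x y) (hx : P x) (hy : ¬ P y) : ∃ a b, S a b ∧ P a ∧ ¬ P b := by
  induction h with
  | refl => exact absurd hx hy
  | @tail b c _ hbc ih =>
    by_cases hb : P b
    · exact ⟨b, c, hbc, hb, hy⟩
    · exact ih hb

theorem rtg_lift {α β : Type*} {S : α → α → Prop} {T : β → β → Prop} (f : α → β)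
    (H : ∀ a b, S a b → T (f a) (f b)) {x y : α} (h : ReflTransGen S x y) :
    ReflTransGen T (f x) (f y) := by
  induction h with
  | refl => exact .refl
  | @tail b c _ hbc ih => exact ih.tail (H _ _ hbc)

theorem relPow_add {V : Type*} {R : V → V → Prop} {a b : ℕ} {x y z : V}
    (h : RelPow R a x y) (h' : RelPow R b y z) : RelPow R (a + b) x z := by
  induction a generalizing x with
  | zero => obtain rfl : x = y := h; rwa [Nat.zero_add]
  | succ a ih =>
    obtain ⟨w, h1, h2⟩ := h
    rw [show a + 1 + b = (a + b) + 1 by omega]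
    exact ⟨w, h1, ih h2⟩

theorem relPow_mono {V : Type*} {R S : V → V → Prop} (hRS : ∀ u v, R u v → S u v) {a : ℕ} {x y : V}
    (h : RelPow R a x y) : RelPow S a x y := by
  induction a generalizing x with
  | zero => exact h
  | succ a ih =>
    obtain ⟨w, h1, h2⟩ := h
    exact ⟨w, hRS _ _ h1, ih h2⟩

theorem relPow_of_rtg {V : Type*} {R : V → V → Prop} {x y : V}
    (h : ReflTransGen R x y) : ∃ k, RelPow R k x y := by
  induction h with
  | refl => exact ⟨0, rfl⟩
  | @tail b c _ hbc ih =>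
    obtain ⟨k, hk⟩ := ih
    exact ⟨k + 1, relPow_add hk ⟨c, hbc, rfl⟩⟩

theorem relPow_seq {V : Type*} {R : V → V → Prop} {k : ℕ} {x y : V}
    (h : RelPow R k x y) : ∃ p : ℕ → V, p 0 = x ∧ p k = y ∧ ∀ i, i < k → R (p i) (p (i + 1)) := by
  induction k generalizing x with
  | zero => exact ⟨fun _ => x, rfl, h, fun i hi => by omega⟩
  | succ k ih =>
    obtain ⟨w, h1, h2⟩ := h
    obtain ⟨p, p0, pk, hp⟩ := ih h2
    refine ⟨fun i => Nat.casesOn i x p, rfl, pk, ?_⟩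
    intro i hi
    cases i with
    | zero => simpa [p0] using h1
    | succ i => exact hp i (by omega)

theorem seq_relPow {V : Type*} {R : V → V → Prop} {k : ℕ} {p : ℕ → V}
    (hp : ∀ i, i < k → R (p i) (p (i + 1))) {i j : ℕ} (hij : i ≤ j) (hj : j ≤ k) :
    RelPow R (j - i) (p i) (p j) := by
  induction j, hij using Nat.le_induction with
  | base => rw [Nat.sub_self]; rfl
  | succ n hn ih =>
    rw [show n + 1 - i = (n - i) + 1 by omega]
    exact relPow_add (ih (by omega)) ⟨_, hp n (by omega), rfl⟩

/-- shortest walks are injective -/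
theorem minwalk {V : Type*} {R : V → V → Prop} {x y : V} (h : ReflTransGen R x y) :
    ∃ (k : ℕ) (p : ℕ → V), RelPow R k x y ∧ p 0 = x ∧ p k = y ∧
      (∀ i, i < k → R (p i) (p (i + 1))) ∧ ∀ i j, i ≤ k → j ≤ k → p i = p j → i = j := by
  classical
  have hex := relPow_of_rtg h
  have hk := Nat.find_spec hex
  have hmin := fun m (hm : RelPow R m x y) => Nat.find_min' hex hm
  set k := Nat.find hex with hkd
  obtain ⟨p, p0, pk, hp⟩ := relPow_seq hk
  have key : ∀ i j, i ≤ k → j ≤ k → p i = p j → j ≤ i := by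
    intro i j hi hj hij
    have w1 := seq_relPow hp (Nat.zero_le i) hi
    have w2 := seq_relPow hp hj le_rfl
    rw [hij] at w1
    have w3 := relPow_add w1 w2
    rw [p0, pk] at w3
    have := hmin _ w3
    omega
  exact ⟨k, p, hk, p0, pk, hp, fun i j hi hj hij => le_antisymm (key j i hj hi hij.symm)
    (key i j hi hj hij)⟩

theorem extendOr {V : Type*} [Fintype V] (G : SimpleGraph V) (R0 : V → V → Prop)
    (hsub : ∀ u v, R0 u v → G.Adj u v) (anti : ∀ u v, R0 u v → ¬ R0 v u) :
    ∃ R, IsOrientation G R ∧ ∀ u v, R0 u v → R u v := by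
  let e := Fintype.equivFin V
  refine ⟨fun u v => R0 u v ∨ (G.Adj u v ∧ ¬ R0 v u ∧ e u < e v), ⟨?_, ?_⟩, fun u v h => Or.inl h⟩
  · rintro u v (h | h)
    · exact hsub _ _ h
    · exact h.1
  · intro u v huv
    have hne : e u ≠ e v := fun h => huv.ne (e.injective h)
    constructor
    · rintro (h | ⟨h1, h2, h3⟩) (h' | ⟨h1', h2', h3'⟩)
      · exact anti _ _ h h'
      · exact h2' h
      · exact h2 h'
      · exact lt_asymm h3 h3'
    · intro h
      by_cases h1 : R0 u v
      · exact Or.inl h1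
      · refine Or.inr ⟨huv, fun h2 => h (Or.inl h2), ?_⟩
        by_contra h3
        exact h (Or.inr ⟨huv.symm, h1, lt_of_le_of_ne (not_lt.mp h3) hne.symm⟩)

theorem goodV {V : Type*} [Fintype V] (G : SimpleGraph V) (R0 : V → V → Prop)
    (hsub : ∀ u v, R0 u v → G.Adj u v) (anti : ∀ u v, R0 u v → ¬ R0 v u)
    (h : ∀ x y, x ≠ y → ∃ w, w ≠ x ∧ w ≠ y ∧ ReflTransGen (fun a b => R0 a b ∧ a ≠ w ∧ b ≠ w) x y) :
    ∃ R, IsOrientation G R ∧ DiamLE R (Fintype.card V - 2) := by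
  classical
  obtain ⟨R, hR, hR0⟩ := extendOr G R0 hsub anti
  refine ⟨R, hR, fun x y => ?_⟩
  by_cases hxy : x = y
  · exact ⟨0, Nat.zero_le _, hxy⟩
  obtain ⟨w, hwx, hwy, hr⟩ := h x y hxy
  obtain ⟨k, p, hk, p0, pk, hp, hinj⟩ := minwalk hr
  refine ⟨k, ?_, relPow_mono (fun u v huv => hR0 _ _ huv.1) hk⟩
  have hsubset : (Finset.range (k + 1)).image p ⊆ Finset.univ.erase w := by
    intro z hz
    obtain ⟨i, hi, rfl⟩ := Finset.mem_image.mp hz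
    rw [Finset.mem_range] at hi
    refine Finset.mem_erase.mpr ⟨?_, Finset.mem_univ _⟩
    cases i with
    | zero => rw [p0]; exact hwx.symm
    | succ i => exact (hp i (by omega)).2.2
  have hc := Finset.card_le_card hsubset
  rw [Finset.card_erase_of_mem (Finset.mem_univ _), Finset.card_image_of_injOn, Finset.card_range,
    Finset.card_univ] at hc
  · omega
  · intro i hi j hj hij
    simp only [Finset.coe_range, Set.mem_Iio] at hi hj
    exact hinj i j (by omega) (by omega) hij

theorem robbins {V : Type*} [Fintype V] (G : SimpleGraph V) (hbl : Bridgeless G) :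
    ∃ R : V → V → Prop, (∀ u v, R u v → G.Adj u v) ∧ (∀ u v, R u v → ¬ R v u) ∧
      ∀ x y, ReflTransGen R x y := by
  classical
  obtain ⟨hconn, hbr⟩ := hbl
  obtain ⟨r⟩ := hconn.nonempty
  let P : Finset V → Prop := fun A => r ∈ A ∧ ∃ R : V → V → Prop, (∀ u v, R u v → G.Adj u v) ∧
    (∀ u v, R u v → ¬ R v u) ∧ ∀ x ∈ A, ∀ y ∈ A, ReflTransGen (fun a b => R a b ∧ a ∈ A ∧ b ∈ A) x y
  have hne : (Finset.univ.filter P).Nonempty := by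
    refine ⟨{r}, Finset.mem_filter.mpr ⟨Finset.mem_univ _, Finset.mem_singleton_self r,
      fun _ _ => False, fun _ _ h => h.elim, fun _ _ h => h.elim, ?_⟩⟩
    intro x hx y hy
    rw [Finset.mem_singleton] at hx hy
    subst hx; subst hy
    exact .refl
  obtain ⟨A, hA, hmax⟩ := Finset.exists_max_image _ Finset.card hne
  obtain ⟨-, hrA, R, hsub, anti, hstr⟩ := Finset.mem_filter.mp hA
  by_cases hall : ∀ v, v ∈ A
  · exact ⟨R, hsub, anti, fun x y => rtg_lift id (fun a b h => h.1) (hstr x (hall x) y (hall y))⟩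
  exfalso
  push Not at hall
  obtain ⟨z, hz⟩ := hall
  obtain ⟨u, v, huv, hu, hv⟩ := rtg_cross (fun x => x ∈ A)
    ((SimpleGraph.reachable_iff_reflTransGen _ _).mp (hconn.preconnected r z)) hrA hz
  have hreach : (G.deleteEdges {s(u, v)}).Reachable v u := by
    have := hbr s(u, v)
    rw [isBridge_iff, not_not] at this
    exact this.symm
  set G' := G.deleteEdges {s(u, v)} with hG'
  have hle : ∀ a b, G'.Adj a b → G.Adj a b := fun a b h => (deleteEdges_le _ : G' ≤ G) h
  have hnadj : ¬ G'.Adj v u := by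
    rw [hG', deleteEdges_adj]
    rintro ⟨-, h⟩
    exact h (by simp [Sym2.eq_swap])
  obtain ⟨R', hR'⟩ : ∃ R' : V → V → Prop, R' = fun x y => (x ∈ A ∧ y ∈ A ∧ R x y) ∨ (x = u ∧ y = v) ∨
    (x ∉ A ∧ G'.Adj x y ∧ G'.dist y u < G'.dist x u) := ⟨_, rfl⟩
  have hsub' : ∀ x y, R' x y → G.Adj x y := by
    subst hR'
    rintro x y (⟨_, _, h⟩ | ⟨rfl, rfl⟩ | ⟨_, h, _⟩)
    · exact hsub _ _ h
    · exact huv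
    · exact hle _ _ h
  have anti' : ∀ x y, R' x y → ¬ R' y x := by
    subst hR'
    rintro x y (⟨h1, h2, h3⟩ | ⟨rfl, rfl⟩ | ⟨h1, h2, h3⟩) (⟨k1, k2, k3⟩ | ⟨k1, k2⟩ | ⟨k1, k2, k3⟩)
    · exact anti _ _ h3 k3
    · subst k2; exact hv h1
    · exact k1 h2
    · exact hv k1
    · exact huv.ne k2
    · exact hnadj k2
    · exact h1 k2
    · subst k1; subst k2; exact hnadj h2
    · omega
  have hAR : ∀ x ∈ A, ∀ y ∈ A, ReflTransGen R' x y := by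
    intro x hx y hy
    refine rtg_lift id ?_ (hstr x hx y hy)
    subst hR'
    exact fun a b h => Or.inl ⟨h.2.1, h.2.2, h.1⟩
  have hout : ∀ d x, G'.dist x u = d → G'.Reachable x u → ∃ a ∈ A, ReflTransGen R' x a := by
    intro d
    induction d using Nat.strong_induction_on with
    | _ d ih =>
      intro x hd hxu
      by_cases hxA : x ∈ A
      · exact ⟨x, hxA, .refl⟩
      obtain ⟨q, hq⟩ := hxu.exists_walk_length_eq_dist
      cases q with
      | nil => exact absurd hu hxA
      | @cons _ y _ hxy q =>
        rw [Walk.length_cons] at hq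
        have hy := dist_le q
        obtain ⟨a, ha, har⟩ := ih (G'.dist y u) (by omega) y rfl q.reachable
        refine ⟨a, ha, ReflTransGen.head ?_ har⟩
        subst hR'
        exact Or.inr (Or.inr ⟨hxA, hxy, by omega⟩)
  obtain ⟨a, ha, hva⟩ := hout _ v rfl hreach
  have hRuv : R' u v := by subst hR'; exact Or.inr (Or.inl ⟨rfl, rfl⟩)
  let A' : Finset V := Finset.univ.filter fun z => ReflTransGen R' r z ∧ ReflTransGen R' z r
  have hA' : ∀ z, z ∈ A' ↔ ReflTransGen R' r z ∧ ReflTransGen R' z r := fun z => by simp [A']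
  have hPA' : P A' := by
    refine ⟨(hA' r).mpr ⟨.refl, .refl⟩, R', hsub', anti', ?_⟩
    intro x hx y hy
    have hxy : ReflTransGen R' x y := ((hA' x).mp hx).2.trans ((hA' y).mp hy).1
    induction hxy using ReflTransGen.head_induction_on with
    | refl => exact .refl
    | @head b c hbc hcy ih =>
      have hc : c ∈ A' := (hA' c).mpr ⟨((hA' b).mp hx).1.tail hbc, hcy.trans ((hA' y).mp hy).2⟩
      exact ReflTransGen.head ⟨hbc, hx, hc⟩ (ih hc)
  have hss : A ⊂ A' := by
    refine (Finset.ssubset_iff_of_subset ?_).mpr ⟨v, (hA' v).mpr ⟨(hAR r hrA u hu).tail hRuv,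
      hva.trans (hAR a ha r hrA)⟩, hv⟩
    exact fun z hz => (hA' z).mpr ⟨hAR r hrA z hz, hAR z hz r hrA⟩
  have h1 := Finset.card_lt_card hss
  have h2 := hmax A' (Finset.mem_filter.mpr ⟨Finset.mem_univ _, hPA'⟩)
  omega

theorem stmt_13 {V : Type*} [Fintype V] (G : SimpleGraph V)
    (hn : 5 ≤ Fintype.card V) (hbl : Bridgeless G)
    (hsize : Fintype.card V + 3 ≤ G.edgeSet.ncard) :
    ∃ R : V → V → Prop, IsOrientation G R ∧ DiamLE R (Fintype.card V - 2) := by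
  classical
  obtain ⟨R, hsub, anti, hstr⟩ := robbins G hbl
  by_cases hd : DiamLE R (Fintype.card V - 2)
  · obtain ⟨R1, h1, h2⟩ := extendOr G R hsub anti
    refine ⟨R1, h1, fun x y => ?_⟩
    obtain ⟨k, hk, h⟩ := hd x y
    exact ⟨k, hk, relPow_mono h2 h⟩
  unfold DiamLE at hd
  push Not at hd
  obtain ⟨x, y, hxy⟩ := hd
  obtain ⟨N, p, hN, p0, pN, hp, hinj⟩ := minwalk (hstr x y)
  have hinjOn : Set.InjOn p (Finset.range (N + 1)) := by
    intro i hi j hj hij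
    simp only [Finset.coe_range, Set.mem_Iio] at hi hj
    exact hinj i j (by omega) (by omega) hij
  have hcard := Finset.card_image_of_injOn hinjOn
  rw [Finset.card_range] at hcard
  have hle := Finset.card_le_univ ((Finset.range (N + 1)).image p)
  have hgt : Fintype.card V - 2 < N := by
    by_contra hcon
    exact hxy N (by omega) hN
  have hNV : Fintype.card V = N + 1 := by omega
  have himg : (Finset.range (N + 1)).image p = Finset.univ :=
    (Finset.card_eq_iff_eq_univ _).mp (by omega)
  have hsurj : ∀ v, ∃ i, i ≤ N ∧ p i = v := by
    intro v
    have : v ∈ (Finset.range (N + 1)).image p := himg ▸ Finset.mem_univ v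
    obtain ⟨i, hi, h⟩ := Finset.mem_image.mp this
    exact ⟨i, by rw [Finset.mem_range] at hi; omega, h⟩
  obtain ⟨C, hCd⟩ : ∃ C : ℕ → ℕ → Prop, ∀ a b, C a b ↔ a + 2 ≤ b ∧ b ≤ N ∧ G.Adj (p a) (p b) :=
    ⟨_, fun _ _ => Iff.rfl⟩
  have hC : ∀ a b, C a b → a + 2 ≤ b ∧ b ≤ N := fun a b h =>
    ⟨((hCd a b).mp h).1, ((hCd a b).mp h).2.1⟩
  have hcov : ∀ i, i < N → ∃ a b, C a b ∧ a ≤ i ∧ i < b := by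
    intro i hi
    obtain ⟨u, v, huv, ⟨b, hb, hiN, rfl⟩, hv⟩ := rtg_cross (fun u => ∃ b, b ≤ N ∧ i < b ∧ p b = u)
      (hstr (p N) (p 0)) ⟨N, le_rfl, hi, rfl⟩ (by
        rintro ⟨b, h1, h2, h3⟩
        have := hinj _ _ h1 (Nat.zero_le _) h3
        omega)
    obtain ⟨a, ha, rfl⟩ := hsurj v
    have hai : a ≤ i := by
      by_contra hcon
      exact hv ⟨a, ha, by omega, rfl⟩
    refine ⟨a, b, (hCd _ _).mpr ⟨?_, hb, (hsub _ _ huv).symm⟩, hai, hiN⟩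
    by_contra hcon
    obtain rfl : b = a + 1 := by omega
    exact anti _ _ huv (hp a (by omega))
  have h4 : ∀ l : List (ℕ × ℕ), l.length ≤ 3 → ∃ a b, C a b ∧ (a, b) ∉ l := by
    intro l hl
    by_contra hcon
    push Not at hcon
    have hE : G.edgeSet ⊆ (((Finset.range N).image (fun i => s(p i, p (i + 1))) ∪
        l.toFinset.image (fun q => s(p q.1, p q.2)) : Finset (Sym2 V)) : Set (Sym2 V)) := by
      have main : ∀ a b, a < b → b ≤ N → G.Adj (p a) (p b) →
          s(p a, p b) ∈ ((Finset.range N).image (fun i => s(p i, p (i + 1))) ∪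
        l.toFinset.image (fun q => s(p q.1, p q.2)) : Finset (Sym2 V)) := by
        intro a b hab hb hadj
        rw [Finset.mem_union]
        by_cases h : b = a + 1
        · subst h
          exact Or.inl (Finset.mem_image.mpr ⟨a, Finset.mem_range.mpr (by omega), rfl⟩)
        · exact Or.inr (Finset.mem_image.mpr ⟨(a, b), List.mem_toFinset.mpr
            (hcon a b ((hCd a b).mpr ⟨by omega, hb, hadj⟩)), rfl⟩)
      intro e
      induction e using Sym2.ind with
      | _ u v =>
        intro huv
        rw [mem_edgeSet] at huv
        obtain ⟨a, ha, rfl⟩ := hsurj u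
        obtain ⟨b, hb, rfl⟩ := hsurj v
        rcases Nat.lt_trichotomy a b with h | h | h
        · exact main a b h hb huv
        · exact absurd (congrArg p h) huv.ne
        · rw [Sym2.eq_swap]
          exact main b a h ha huv.symm
    have c1 := Set.ncard_le_ncard hE (Finset.finite_toSet _)
    rw [Set.ncard_coe_finset] at c1
    have c2 := Finset.card_union_le ((Finset.range N).image (fun i => s(p i, p (i + 1))))
        (l.toFinset.image (fun q => s(p q.1, p q.2)))
    have c3 := Finset.card_image_le (s := Finset.range N) (f := fun i => s(p i, p (i + 1)))
    have c4 := Finset.card_image_le (s := l.toFinset) (f := fun q => s(p q.1, p q.2))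
    have c5 := l.toFinset_card_le
    rw [Finset.card_range] at c3
    omega
  obtain ⟨Rc, hRc, hanti, hgood⟩ := coreThm hC hcov (by omega) h4
  have hbd : ∀ i j, Rc i j → i ≤ N ∧ j ≤ N := by
    intro i j h
    rcases hRc i j h with h | h | h | h
    · omega
    · omega
    · have := hC _ _ h; omega
    · have := hC _ _ h; omega
  refine goodV G (fun u v => ∃ i j, Rc i j ∧ p i = u ∧ p j = v) ?_ ?_ ?_
  · rintro u v ⟨i, j, h, rfl, rfl⟩
    rcases hRc i j h with ⟨rfl, h⟩ | ⟨rfl, h⟩ | h | h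
    · exact hsub _ _ (hp i (by omega))
    · exact (hsub _ _ (hp j (by omega))).symm
    · exact ((hCd _ _).mp h).2.2
    · exact ((hCd _ _).mp h).2.2.symm
  · rintro u v ⟨i, j, h, rfl, rfl⟩ ⟨i', j', h', e1, e2⟩
    have b1 := hbd _ _ h
    have b2 := hbd _ _ h'
    obtain rfl := hinj _ _ b2.1 b1.2 e1
    obtain rfl := hinj _ _ b2.2 b1.1 e2
    exact hanti _ _ h h'
  · intro u v huv
    obtain ⟨a, ha, rfl⟩ := hsurj u
    obtain ⟨b, hb, rfl⟩ := hsurj v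
    obtain ⟨w, hw, hwa, hwb, hr⟩ := hgood a b ha hb (fun h => huv (congrArg p h))
    refine ⟨p w, fun h => hwa (hinj _ _ hw ha h), fun h => hwb (hinj _ _ hw hb h), ?_⟩
    refine rtg_lift p ?_ hr
    rintro i j ⟨h1, h2, h3⟩
    have bd := hbd _ _ h1
    exact ⟨⟨i, j, h1, rfl, rfl⟩, fun h => h2 (hinj _ _ bd.1 hw h), fun h => h3 (hinj _ _ bd.2 hw h)⟩
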